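/- Let p be an odd prime and k an integer with 1 ≤ k < p/2. Then for every i ≥ 0 one has the identity A_{i,k}^p = A_{i+1,k} P_k − 2k θ_k^{i+1} Q_k in F_p[T]. -/

import Mathlib

/-!
Since `f^p - f(a)^p = (f - f(a))^p`, the residue of `A_i^p` modulo `P_k = (T² - 1)^k` depends only
on the values of `A_i` at `±1`. These are `±θ_k^i`, so `A_i^p ≡ θ_k^i T^p` modulo `(T² - 1)^p`, and
everything reduces to `T^p`.

For `T^p`, `exists_cofactor` shows `T^p = B P_k - 2k θ_k Q_k` for some `B`, by induction on `k`: the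
relation `(2k+1) Q_{k+1} + 2k Q_k = T P_k` (`Qk_recurrence`) together with
`2(k+1) θ_{k+1} = -(2k+1) θ_k` turns the identity for `k` into the one for `k + 1`, as soon as
`T² - 1` divides `B - θ_k T`. This holds because differentiating the identity for `k` yields
`B(±1) = ±θ_k` (`eval_cofactor`).

Finally (`Aseq_step`), `deg Q_k < deg P_k` identifies `A_{i+1}` with
`θ_k^i B + (T² - 1)^(p-k) D^p` for some `D`, whose values at `±1` are `±θ_k^(i+1)`, so the
induction on `i` continues.
-/

noncomputable section
open Polynomial

def Tval (F : Type) [Field F] : LaurentSeries F :=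
  (HahnSeries.single (1 : ℤ) (1 : F) : LaurentSeries F)⁻¹

def adeg {F : Type} [Field F] (α : LaurentSeries F) : ℤ := -α.order

def pEval {F : Type} [Field F] (f : Polynomial F) : LaurentSeries F :=
  f.eval₂ HahnSeries.C (Tval F)

def pEvalHom (F : Type) [Field F] : Polynomial F →+* LaurentSeries F :=
  Polynomial.eval₂RingHom HahnSeries.C (Tval F)

/-- substitution `T ↦ v T` on Laurent series in `1/T`
(the underlying Hahn-series variable is `1/T`). -/
def scaleT {F : Type} [Field F] (v : F) (α : LaurentSeries F) : LaurentSeries F where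
  coeff n := v ^ (-n) * α.coeff n
  isPWO_support' := α.isPWO_support'.mono (fun n hn => by
    simp only [Function.mem_support, ne_eq] at hn ⊢
    intro h; exact hn (by rw [h, mul_zero]))

/-- coefficient-wise map of Laurent series along a ring homomorphism. -/
def lsMap {F L : Type} [Field F] [Field L] (f : F →+* L) (α : LaurentSeries F) :
    LaurentSeries L where
  coeff n := f (α.coeff n)
  isPWO_support' := α.isPWO_support'.mono (fun n hn => by
    simp only [Function.mem_support, ne_eq] at hn ⊢
    intro h; exact hn (by rw [h, map_zero]))

/-- integral (polynomial) part of a Laurent series in `1/T`. -/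
def intPart {F : Type} [Field F] (α : LaurentSeries F) : Polynomial F :=
  ∑ j ∈ Finset.range ((-α.order).toNat + 1),
    Polynomial.C (α.coeff (-(j : ℤ))) * Polynomial.X ^ j

def IsCFOf {F : Type} [Field F] (α : LaurentSeries F) (a : ℕ → Polynomial F)
    (β : ℕ → LaurentSeries F) : Prop :=
  β 1 = α ∧ ∀ n, 1 ≤ n →
    0 < (a n).degree ∧ 0 < adeg (β n) ∧ β n = pEval (a n) + (β (n + 1))⁻¹

def fcf {F : Type} [DivisionRing F] : List F → F
  | [] => 0
  | [c] => c
  | c :: d :: t => c + (fcf (d :: t))⁻¹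

def fcfWD {F : Type} [DivisionRing F] : List F → Prop
  | [] => True
  | [_] => True
  | _ :: d :: t => fcf (d :: t) ≠ 0 ∧ fcfWD (d :: t)

def polyInt {F : Type} [Field F] (f : Polynomial F) : Polynomial F :=
  ∑ i ∈ Finset.range (f.natDegree + 1),
    Polynomial.C (f.coeff i * ((i : F) + 1)⁻¹) * Polynomial.X ^ (i + 1)

def Pka {F : Type} [Field F] (k : ℕ) (a : F) : Polynomial F :=
  (Polynomial.X ^ 2 + Polynomial.C a) ^ k

def Qka {F : Type} [Field F] (k : ℕ) (a : F) : Polynomial F := polyInt (Pka (k - 1) a)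

def Pk {F : Type} [Field F] (k : ℕ) : Polynomial F := (Polynomial.X ^ 2 - 1) ^ k

def Qk {F : Type} [Field F] (k : ℕ) : Polynomial F := polyInt (Pk (k - 1))

def Aseq (F : Type) [Field F] (p k : ℕ) : ℕ → Polynomial F
  | 0 => Polynomial.X
  | i + 1 => Aseq F p k i ^ p / Pk k

def vseq (F : Type) [Field F] (k : ℕ) : ℕ → F
  | 0 => 1
  | 1 => 2 * k - 1
  | i + 1 =>
      (((2 * (k : ℤ) - 2 * i - 1) * (2 * (k : ℤ) - 2 * i + 1) : ℤ) : F) *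
        (((i : F) * (2 * k - i))⁻¹) * (vseq F k i)⁻¹

def theta (F : Type) [Field F] (k : ℕ) : F :=
  (-1) ^ k * ∏ j ∈ Finset.Icc 1 k, (1 - (2 * (j : F))⁻¹)

def continuant {R : Type} [CommRing R] (a : ℕ → R) (c0 c1 : R) : ℕ → R
  | 0 => c0
  | 1 => c1
  | n + 2 => a (n + 2) * continuant a c0 c1 (n + 1) + continuant a c0 c1 n

def largestPow (m N : ℕ) : ℕ := sSup {j : ℕ | m ^ j ∣ N}

def nu0 {F : Type} [Field F] (a : ℕ → Polynomial F) : ℝ :=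
  Filter.limsup
    (fun n => ((a (n + 1)).natDegree : ℝ) / ∑ j ∈ Finset.Icc 1 n, ((a j).natDegree : ℝ))
    Filter.atTop

theorem natCast_add_one_ne_zero {p : ℕ} {n : ℕ} (h : n + 1 < p) : (n : ZMod p) + 1 ≠ 0 := by
  have : ((n + 1 : ℕ) : ZMod p) ≠ 0 := by
    rw [Ne, ZMod.natCast_eq_zero_iff]
    exact Nat.not_dvd_of_pos_of_lt (by omega) h
  exact_mod_cast this

theorem Pk_monic {F : Type} [Field F] (k : ℕ) : (Pk k : F[X]).Monic := by
  have h : (X ^ 2 - 1 : F[X]).Monic := by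
    simpa using monic_X_pow_sub_C (1 : F) (n := 2) (by norm_num)
  exact h.pow k

theorem Pk_natDegree {F : Type} [Field F] (k : ℕ) : (Pk k : F[X]).natDegree = 2 * k := by
  have h : (X ^ 2 - 1 : F[X]).natDegree = 2 := by
    simpa using natDegree_X_pow_sub_C (n := 2) (r := (1 : F))
  rw [Pk, natDegree_pow, h, mul_comm]

theorem coeff_polyInt_zero {F : Type} [Field F] (f : F[X]) : (polyInt f).coeff 0 = 0 := by
  simp [polyInt]

theorem coeff_polyInt_succ {F : Type} [Field F] (f : F[X]) (n : ℕ) :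
    (polyInt f).coeff (n + 1) = f.coeff n * ((n : F) + 1)⁻¹ := by
  simp only [polyInt, finsetSum_coeff, coeff_C_mul, coeff_X_pow, add_left_inj, mul_ite, mul_one,
    mul_zero, Finset.sum_ite_eq, Finset.mem_range]
  split_ifs with h
  · rfl
  · rw [coeff_eq_zero_of_natDegree_lt (by omega), zero_mul]

theorem natDegree_polyInt_le {F : Type} [Field F] (f : F[X]) :
    (polyInt f).natDegree ≤ f.natDegree + 1 := by
  rw [natDegree_le_iff_coeff_eq_zero]
  rintro (_ | n) hn
  · exact coeff_polyInt_zero f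
  · rw [coeff_polyInt_succ, coeff_eq_zero_of_natDegree_lt (by omega), zero_mul]

/-- The only constraint on the characteristic is that the exponents `n + 1 ≤ deg f + 1` introduced
by integration are nonzero modulo `p`. -/
theorem derivative_polyInt {p : ℕ} [Fact p.Prime] (f : (ZMod p)[X]) (hf : f.natDegree + 1 < p) :
    derivative (polyInt f) = f := by
  ext n
  rw [coeff_derivative, coeff_polyInt_succ]
  rcases lt_or_ge f.natDegree n with h | h
  · simp [coeff_eq_zero_of_natDegree_lt h]
  · rw [mul_assoc, inv_mul_cancel₀ (natCast_add_one_ne_zero (by omega)), mul_one]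

theorem derivative_Pk_succ {F : Type} [Field F] (k : ℕ) :
    derivative (Pk (k + 1) : F[X]) = C (2 * ((k : F) + 1)) * (X * Pk k) := by
  simp only [Pk, derivative_pow, derivative_sub, derivative_X, derivative_one]
  simp
  ring

/-- Integrated form of `(T (T² - 1)^k)' = (2k+1) (T² - 1)^k + 2k (T² - 1)^(k-1)`. For `k = 0` the
junk value of `Qk 0` is killed by its coefficient. -/
theorem Qk_recurrence {p : ℕ} [Fact p.Prime] (k : ℕ) (hk : 2 * k + 2 < p) :
    C (2 * (k : ZMod p) + 1) * Qk (k + 1) + C (2 * (k : ZMod p)) * Qk k = X * Pk k := by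
  have hX : X * derivative (Pk k : (ZMod p)[X])
      = C (2 * (k : ZMod p)) * Pk k + C (2 * (k : ZMod p)) * Pk (k - 1) := by
    rcases k with _ | k
    · simp [Pk]
    · rw [derivative_Pk_succ, Nat.add_sub_cancel, Pk, Pk]
      push_cast
      ring
  ext n
  rcases n with _ | n
  · simp [Qk, coeff_polyInt_zero]
  simp only [Qk, Nat.add_sub_cancel, coeff_add, coeff_C_mul, coeff_polyInt_succ, coeff_X_mul]
  rcases lt_or_ge (2 * k) n with h | h
  · rw [coeff_eq_zero_of_natDegree_lt (by rw [Pk_natDegree]; omega),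
      coeff_eq_zero_of_natDegree_lt (by rw [Pk_natDegree]; omega)]
    ring
  · have hc := congrArg (fun f => coeff f n) hX
    have hn : ((n : ZMod p) + 1) ≠ 0 := natCast_add_one_ne_zero (by omega)
    have hl : (X * derivative (Pk k : (ZMod p)[X])).coeff n = n * (Pk k : (ZMod p)[X]).coeff n := by
      rcases n with _ | n
      · simp
      · rw [coeff_X_mul, coeff_derivative]
        push_cast
        ring
    simp only [hl, coeff_add, coeff_C_mul] at hc
    field_simp
    linear_combination -hc

theorem theta_succ {p : ℕ} [Fact p.Prime] (k : ℕ) (hk : 2 * k + 2 < p) :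
    2 * ((k : ZMod p) + 1) * theta (ZMod p) (k + 1)
      = -((2 * (k : ZMod p) + 1) * theta (ZMod p) k) := by
  have h1 : ((k : ZMod p) + 1) ≠ 0 := natCast_add_one_ne_zero (by omega)
  have h2 : (2 : ZMod p) ≠ 0 := by
    have := natCast_add_one_ne_zero (p := p) (n := 1) (by omega)
    norm_num at this
    exact this
  rw [theta, theta, Finset.prod_Icc_succ_top (by omega)]
  push_cast
  field_simp
  ring

/-- A polynomial which agrees with `c T` at `1` and `-1` differs from it by a multiple of
`T² - 1`. -/
theorem exists_sub_eq_mul {p : ℕ} [Fact p.Prime] (hp : 2 < p) (f : (ZMod p)[X]) (c : ZMod p)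
    (h1 : f.eval 1 = c) (h2 : f.eval (-1) = -c) : ∃ D, f - C c * X = (X ^ 2 - 1) * D := by
  have h2' : (1 : ZMod p) + 1 ≠ 0 := by
    simpa using natCast_add_one_ne_zero (p := p) (n := 1) hp
  have d1 : (X - C 1 : (ZMod p)[X]) ∣ f - C c * X := by
    rw [dvd_iff_isRoot]; simp [IsRoot, h1]
  have d2 : (X - C (-1) : (ZMod p)[X]) ∣ f - C c * X := by
    rw [dvd_iff_isRoot]; simp [IsRoot, h2]
  have hco : IsCoprime (X - C 1 : (ZMod p)[X]) (X - C (-1)) :=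
    isCoprime_X_sub_C_of_isUnit_sub (by simpa using h2')
  obtain ⟨D, hD⟩ := hco.mul_dvd d1 d2
  refine ⟨D, hD.trans ?_⟩
  simp only [C_neg, C_1]
  ring

/-- If `T^p = B P_k - 2k θ_k Q_k`, then `B` takes the values `±θ_k` at `±1`: differentiating and
cancelling `P_{k-1}` gives `(T² - 1) B' + 2k T B = 2k θ_k`. -/
theorem eval_cofactor {p : ℕ} [Fact p.Prime] (hodd : Odd p) (k : ℕ) (hk : 2 * k < p) (B : (ZMod p)[X])
    (hB : X ^ p = B * Pk k - C (2 * (k : ZMod p) * theta (ZMod p) k) * Qk k) :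
    B.eval 1 = theta (ZMod p) k ∧ B.eval (-1) = -theta (ZMod p) k := by
  rcases k with _ | k
  · have hBX : B = X ^ p := by simpa [Pk] using hB.symm
    simp [hBX, theta, hodd.neg_one_pow]
  have hd := congrArg derivative hB
  have hQ : derivative (Qk (k + 1) : (ZMod p)[X]) = Pk k :=
    derivative_polyInt _ (by rw [Pk_natDegree]; omega)
  rw [derivative_X_pow, CharP.cast_eq_zero, derivative_sub, derivative_mul, derivative_C_mul, hQ,
    derivative_Pk_succ] at hd
  have hP : (Pk (k + 1) : (ZMod p)[X]) = (X ^ 2 - 1) * Pk k := by rw [Pk, Pk]; ring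
  have hc : (X ^ 2 - 1) * derivative B + C (2 * ((k : ZMod p) + 1)) * X * B
      = C (2 * ((k : ZMod p) + 1)) * C (theta (ZMod p) (k + 1)) := by
    apply mul_right_cancel₀ (Pk_monic (F := ZMod p) k).ne_zero
    rw [hP] at hd
    rw [Nat.cast_succ, C_0] at hd
    simp only [C_mul] at hd ⊢
    linear_combination -hd
  have hne : 2 * ((k : ZMod p) + 1) ≠ 0 := by
    have := natCast_add_one_ne_zero (p := p) (n := 2 * k + 1) (by omega)
    push_cast at this
    intro h
    exact this (by linear_combination h)
  have e1 := congrArg (eval 1) hc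
  have e2 := congrArg (eval (-1)) hc
  simp only [eval_add, eval_mul, eval_sub, eval_pow, eval_X, eval_one, eval_C] at e1 e2
  constructor <;> apply mul_left_cancel₀ hne
  · linear_combination e1
  · linear_combination -e2

/-- The case `i = 0`, with an unspecified cofactor `B`. By `Qk_recurrence` and `theta_succ`,
passing from `k` to `k + 1` subtracts `θ_k T P_k`, and `B - θ_k T` is divisible by `T² - 1`. -/
theorem exists_cofactor {p : ℕ} [Fact p.Prime] (hodd : Odd p) (k : ℕ) (hk : 2 * k < p) :
    ∃ B : (ZMod p)[X], X ^ p = B * Pk k - C (2 * (k : ZMod p) * theta (ZMod p) k) * Qk k := by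
  induction k with
  | zero => exact ⟨X ^ p, by simp [Pk]⟩
  | succ k ih =>
    obtain ⟨B, hB⟩ := ih (by omega)
    obtain ⟨h1, h2⟩ := eval_cofactor hodd k (by omega) B hB
    obtain ⟨D, hD⟩ := exists_sub_eq_mul (by omega) B _ h1 h2
    refine ⟨D, ?_⟩
    have hQ := Qk_recurrence (p := p) k (by omega)
    have hP : (Pk (k + 1) : (ZMod p)[X]) = (X ^ 2 - 1) * Pk k := by rw [Pk, Pk]; ring
    rw [Nat.cast_succ, theta_succ k (by omega), hB, hP]
    simp only [C_neg, C_mul] at hQ ⊢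
    linear_combination Pk k * hD - C (theta (ZMod p) k) * hQ

/-- Induction step on `i`: the values at `±1` determine `A_i^p` modulo `P_k`. -/
theorem Aseq_step {p : ℕ} [Fact p.Prime] (hodd : Odd p) (k : ℕ) (hk : 1 ≤ k) (hk2 : 2 * k < p) (i : ℕ)
    (h1 : (Aseq (ZMod p) p k i).eval 1 = theta (ZMod p) k ^ i)
    (h2 : (Aseq (ZMod p) p k i).eval (-1) = -theta (ZMod p) k ^ i) :
    Aseq (ZMod p) p k i ^ p
      = Aseq (ZMod p) p k (i + 1) * Pk k
        - C (2 * (k : ZMod p) * theta (ZMod p) k ^ (i + 1)) * Qk k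
    ∧ (Aseq (ZMod p) p k (i + 1)).eval 1 = theta (ZMod p) k ^ (i + 1)
    ∧ (Aseq (ZMod p) p k (i + 1)).eval (-1) = -theta (ZMod p) k ^ (i + 1) := by
  obtain ⟨B, hB⟩ := exists_cofactor hodd k hk2
  obtain ⟨b1, b2⟩ := eval_cofactor hodd k hk2 B hB
  obtain ⟨D, hD⟩ := exists_sub_eq_mul (by omega) _ _ h1 h2
  set t := theta (ZMod p) k with ht
  set A := Aseq (ZMod p) p k i with hA
  have hF : A ^ p - C (t ^ i) * X ^ p = (X ^ 2 - 1) ^ (p - k) * D ^ p * Pk k := by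
    have hs : ((X ^ 2 - 1 : (ZMod p)[X])) ^ p = (X ^ 2 - 1) ^ (p - k) * Pk k := by
      rw [Pk, ← pow_add, Nat.sub_add_cancel (by omega)]
    have hc : (C (t ^ i) : (ZMod p)[X]) ^ p = C (t ^ i) := by rw [← C_pow, ZMod.pow_card]
    rw [← hc, ← mul_pow, ← sub_pow_char, hD, mul_pow, hs]
    ring
  have hid : A ^ p = ((X ^ 2 - 1) ^ (p - k) * D ^ p + C (t ^ i) * B) * Pk k
      - C (2 * (k : ZMod p) * t ^ (i + 1)) * Qk k := by
    rw [hB] at hF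
    have ht' : t ^ (i + 1) = t ^ i * t := pow_succ t i
    rw [ht']
    simp only [C_mul] at hF ⊢
    linear_combination hF
  have hdeg : (-(C (2 * (k : ZMod p) * t ^ (i + 1)) * Qk k)).degree
      < (Pk k : (ZMod p)[X]).degree := by
    apply degree_lt_degree
    rw [natDegree_neg, Pk_natDegree]
    have := natDegree_C_mul_le (2 * (k : ZMod p) * t ^ (i + 1)) (Qk k)
    have hq := natDegree_polyInt_le (Pk (k - 1) : (ZMod p)[X])
    rw [Pk_natDegree] at hq
    change (Qk k : (ZMod p)[X]).natDegree ≤ _ at hq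
    omega
  have hnext : Aseq (ZMod p) p k (i + 1) = (X ^ 2 - 1) ^ (p - k) * D ^ p + C (t ^ i) * B := by
    rw [Aseq, ← hA, ← divByMonic_eq_div _ (Pk_monic k)]
    refine (div_modByMonic_unique _ _ (Pk_monic k) ⟨?_, hdeg⟩).1
    rw [hid]
    ring
  have hpk : p - k ≠ 0 := by omega
  refine ⟨by rw [hnext]; exact hid, ?_, ?_⟩
  · rw [hnext]
    simp [b1, hpk, pow_succ]
  · rw [hnext]
    simp [b2, hpk, pow_succ]

/-- For an odd prime `p`, `1 ≤ k < p/2` and every `i ≥ 0`,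
`A_{i,k}^p = A_{i+1,k} P_k − 2k θ_k^{i+1} Q_k` in `F_p[T]`. -/
theorem stmt11 (p : ℕ) [Fact p.Prime] (hodd : Odd p) (k : ℕ) (hk : 1 ≤ k)
    (hk2 : 2 * k < p) (i : ℕ) :
    Aseq (ZMod p) p k i ^ p
      = Aseq (ZMod p) p k (i + 1) * Pk k
        - Polynomial.C (2 * (k : ZMod p) * theta (ZMod p) k ^ (i + 1)) * Qk k := by
  have key : (Aseq (ZMod p) p k i).eval 1 = theta (ZMod p) k ^ i
      ∧ (Aseq (ZMod p) p k i).eval (-1) = -theta (ZMod p) k ^ i := by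
    induction i with
    | zero => simp [Aseq]
    | succ i ih => exact (Aseq_step hodd k hk hk2 i ih.1 ih.2).2
  exact (Aseq_step hodd k hk hk2 i key.1 key.2).1
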